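/- For a multispindle X, the map α(x₀,x₁,…,xₙ) = (x₀, x₁−x₀, …, xₙ−x_{n−1}) (extended multilinearly) induces a well-defined chain map C^N(X) → C(X) splitting the quotient β : C(X) → C^N(X) = C(X)/C^D(X); consequently Hₙ(X) ≅ Hₙ^D(X) ⊕ Hₙ^N(X). -/

import Mathlib

/-- The `i`-th face map on tuples, for a binary operation `⋆`. -/
def dFun {X : Type*} (op : X → X → X) (n : ℕ) (i : Fin (n+1)) (x : Fin (n+1) → X) :
    Fin n → X :=
  fun j => if (j : ℕ) < (i : ℕ) then op (x j.castSucc) (x i) else x j.succ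

/-- The `j`-th degeneracy on tuples: `sⱼ(x₀,…,xₙ) = (x₀,…,xⱼ,xⱼ,…,xₙ)`. -/
def sFun {X : Type*} (n : ℕ) (j : Fin (n+1)) (x : Fin (n+1) → X) : Fin (n+2) → X :=
  fun m => if h : (m : ℕ) ≤ (j : ℕ) then x ⟨m, Nat.lt_of_le_of_lt h j.isLt⟩
           else x ⟨(m : ℕ) - 1, by have := m.isLt; omega⟩

/-- The chain group `Cₙ = ℤ X^{n+1}`. -/
abbrev CC (X : Type*) (n : ℕ) := (Fin (n+1) → X) →₀ ℤ

/-- The multi-term boundary `∂ = Σᵢ (−1)ⁱ Σᵣ aᵣ dᵢ^{⋆ᵣ} : Cₙ₊₁ → Cₙ`. -/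
noncomputable def bdL {X : Type*} {k : ℕ} (ops : Fin k → X → X → X) (a : Fin k → ℤ) (n : ℕ) :
    CC X (n+1) →ₗ[ℤ] CC X n :=
  ∑ i : Fin (n+2), ∑ r : Fin k,
    (((-1 : ℤ) ^ (i : ℕ)) * a r) • Finsupp.lmapDomain ℤ ℤ (dFun (ops r) (n+1) i)

/-- The degenerate submodule `C^D`, spanned by images of the degeneracy maps. -/
noncomputable def Dsub {X : Type*} : (n : ℕ) → Submodule ℤ (CC X n)
  | 0 => ⊥
  | n+1 => Submodule.span ℤ
      {y | ∃ (j : Fin (n+1)) (x : Fin (n+1) → X), y = Finsupp.single (sFun n j x) (1 : ℤ)}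

/-- The value of `α` on a basis tuple: `α(x₀,…,xₙ) = (x₀, x₁−x₀, …, xₙ−x_{n−1})`,
expanded multilinearly. -/
noncomputable def alphaB {X : Type*} (n : ℕ) (x : Fin (n+1) → X) : CC X n :=
  ∑ ε : Fin (n+1) → Bool,
    if ε 0 then 0
    else ((-1 : ℤ) ^ (Finset.univ.filter fun i => ε i = true).card) •
      Finsupp.single (fun i : Fin (n+1) =>
        if ε i then x ⟨(i : ℕ) - 1, by have := i.isLt; omega⟩ else x i) 1

/-- The linear map `α : Cₙ → Cₙ`. -/
noncomputable def alphaL {X : Type*} (n : ℕ) : CC X n →ₗ[ℤ] CC X n :=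
  Finsupp.linearCombination ℤ (alphaB n)

/-- The cycles of `C(X)`: everything in degree `0`, `ker ∂` above. -/
noncomputable def ZC {X : Type*} {k : ℕ} (ops : Fin k → X → X → X) (a : Fin k → ℤ) :
    (n : ℕ) → Submodule ℤ (CC X n)
  | 0 => ⊤
  | n+1 => LinearMap.ker (bdL ops a n)

/-- The `n`-th homology `Hₙ(X)`. -/
noncomputable abbrev HC {X : Type*} {k : ℕ} (ops : Fin k → X → X → X) (a : Fin k → ℤ)
    (n : ℕ) :=
  ZC ops a n ⧸ Submodule.comap (ZC ops a n).subtype (LinearMap.range (bdL ops a n))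

/-- The cycles of the degenerate subcomplex `C^D`. -/
noncomputable def ZD {X : Type*} {k : ℕ} (ops : Fin k → X → X → X) (a : Fin k → ℤ) :
    (n : ℕ) → Submodule ℤ (CC X n)
  | 0 => ⊥
  | n+1 => LinearMap.ker (bdL ops a n) ⊓ Dsub (n+1)

/-- The `n`-th degenerate homology `Hₙ^D(X) = Hₙ(C^D)`. -/
noncomputable abbrev HD {X : Type*} {k : ℕ} (ops : Fin k → X → X → X) (a : Fin k → ℤ)
    (n : ℕ) :=
  ZD ops a n ⧸
    Submodule.comap (ZD ops a n).subtype (Submodule.map (bdL ops a n) (Dsub (n+1)))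

/-- The cycles of the normalized complex `C^N = C/C^D`: chains whose boundary is
degenerate. -/
noncomputable def ZN {X : Type*} {k : ℕ} (ops : Fin k → X → X → X) (a : Fin k → ℤ) :
    (n : ℕ) → Submodule ℤ (CC X n)
  | 0 => ⊤
  | n+1 => Submodule.comap (bdL ops a n) (Dsub n)

/-- The `n`-th normalized homology `Hₙ^N(X) = Hₙ(C/C^D)`. -/
noncomputable abbrev HN {X : Type*} {k : ℕ} (ops : Fin k → X → X → X) (a : Fin k → ℤ)
    (n : ℕ) :=
  ZN ops a n ⧸
    Submodule.comap (ZN ops a n).subtype (Dsub n ⊔ LinearMap.range (bdL ops a n))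


section helpers

/-- The tuple obtained by replacing the coordinates selected by `ε` by the previous ones. -/
def tupE {X : Type*} (n : ℕ) (ε : Fin (n+1) → Bool) (x : Fin (n+1) → X) : Fin (n+1) → X :=
  fun i => if ε i then x ⟨(i : ℕ) - 1, by have := i.isLt; omega⟩ else x i

/-- The sign of `ε`. -/
def sgE (n : ℕ) (ε : Fin (n+1) → Bool) : ℤ :=
  (-1 : ℤ) ^ (Finset.univ.filter fun i => ε i = true).card

/-- Flip one bit. -/
def flipE (n : ℕ) (p : Fin (n+1)) (ε : Fin (n+1) → Bool) : Fin (n+1) → Bool :=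
  Function.update ε p (!ε p)

lemma sgE_flip (n : ℕ) (p : Fin (n+1)) (ε : Fin (n+1) → Bool) :
    sgE n (flipE n p ε) = - sgE n ε := by
  have h : ∀ η : Fin (n+1) → Bool, sgE n η = ∏ i, (if η i = true then (-1 : ℤ) else 1) := by
    intro η
    simp [sgE, Finset.prod_ite]
  rw [h, h, ← Finset.mul_prod_erase _ _ (Finset.mem_univ p),
    ← Finset.mul_prod_erase (a := p) Finset.univ (fun i => if ε i = true then (-1 : ℤ) else 1) (Finset.mem_univ p)]
  have : ∏ i ∈ Finset.univ.erase p, (if flipE n p ε i = true then (-1 : ℤ) else 1)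
      = ∏ i ∈ Finset.univ.erase p, (if ε i = true then (-1 : ℤ) else 1) := by
    refine Finset.prod_congr rfl fun i hi => ?_
    have := Finset.ne_of_mem_erase hi
    simp [flipE, this]
  rw [this]
  cases hp : ε p <;> simp [flipE, hp]

lemma alphaB_eq {X : Type*} (n : ℕ) (x : Fin (n+1) → X) :
    alphaB n x = ∑ ε : Fin (n+1) → Bool,
      if ε 0 then 0 else sgE n ε • Finsupp.single (tupE n ε x) (1 : ℤ) := rfl

lemma sum_flip_zero {M : Type*} [AddCommGroup M] (n : ℕ) (p : Fin (n+1)) (hp : p ≠ 0)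
    (f : (Fin (n+1) → Bool) → M) (hf : ∀ ε, f (flipE n p ε) = f ε) :
    ∑ ε : Fin (n+1) → Bool, (if ε 0 then 0 else sgE n ε • f ε) = 0 := by
  refine Finset.sum_involution (fun ε _ => flipE n p ε) ?_ ?_ ?_ ?_
  · intro ε _
    have : flipE n p ε 0 = ε 0 := by simp [flipE, hp.symm]
    rw [this, sgE_flip, hf]
    split <;> simp
  · intro ε _ _ h
    have := congrFun h p
    simp [flipE] at this
  · intro ε _; simp
  · intro ε _
    simp [flipE]

/-- A tuple with two equal neighbours. -/
def dgT {X : Type*} (n : ℕ) (x : Fin (n+1) → X) : Prop :=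
  ∃ (j : ℕ) (h : j + 1 < n + 1), x ⟨j, by omega⟩ = x ⟨j+1, h⟩

lemma Dsub_eq {X : Type*} (n : ℕ) :
    (Dsub n : Submodule ℤ (CC X n)) =
      Submodule.span ℤ {y | ∃ x, dgT n x ∧ y = Finsupp.single x (1 : ℤ)} := by
  cases n with
  | zero =>
    symm
    rw [Dsub, Submodule.span_eq_bot]
    rintro y ⟨x, ⟨j, h, _⟩, _⟩
    omega
  | succ n =>
    rw [Dsub]
    congr 1
    ext y
    constructor
    · rintro ⟨j, x, rfl⟩
      refine ⟨_, ⟨j, by omega, ?_⟩, rfl⟩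
      simp [sFun]
    · rintro ⟨x, ⟨j, h, e⟩, rfl⟩
      refine ⟨⟨j, by omega⟩, fun m => if (m : ℕ) ≤ j then x m.castSucc else x m.succ, ?_⟩
      congr 1
      funext m
      simp only [sFun]
      by_cases h1 : (m : ℕ) ≤ j
      · simp [h1]
      · simp only [h1, dite_false]
        by_cases h2 : (m : ℕ) - 1 ≤ j
        · have : m = ⟨j+1, h⟩ := by ext; simp; omega
          subst this
          simp [← e]
        · simp only [h2, if_false]
          congr 1
          ext; simp; omega

lemma single_mem_Dsub {X : Type*} {n : ℕ} {x : Fin (n+1) → X} (h : dgT n x) :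
    Finsupp.single x (1 : ℤ) ∈ (Dsub n : Submodule ℤ (CC X n)) := by
  rw [Dsub_eq]
  exact Submodule.subset_span ⟨x, h, rfl⟩

lemma Dsub_le {X : Type*} {n : ℕ} {S : Submodule ℤ (CC X n)}
    (h : ∀ x, dgT n x → Finsupp.single x (1 : ℤ) ∈ S) : Dsub n ≤ S := by
  rw [Dsub_eq, Submodule.span_le]
  rintro _ ⟨x, hx, rfl⟩
  exact h x hx

lemma alphaL_single {X : Type*} (n : ℕ) (x : Fin (n+1) → X) :
    alphaL n (Finsupp.single x (1 : ℤ)) = alphaB n x := by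
  simp [alphaL]

lemma alphaL_D {X : Type*} (n : ℕ) (c : CC X n) (hc : c ∈ Dsub n) : alphaL n c = 0 := by
  have : Dsub n ≤ LinearMap.ker (alphaL (X := X) n) := by
    refine Dsub_le fun x hx => ?_
    obtain ⟨j, h, e⟩ := hx
    rw [LinearMap.mem_ker, alphaL_single, alphaB_eq]
    refine sum_flip_zero n ⟨j+1, h⟩ (by simp [Fin.ext_iff]) _ fun ε => ?_
    congr 1
    funext i
    simp only [tupE, flipE]
    by_cases hi : i = ⟨j+1, h⟩
    · subst hi
      simp only [Function.update_self, Nat.add_sub_cancel, e]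
      simp
    · simp [hi]
  exact this hc

lemma alphaL_sub_mem {X : Type*} (n : ℕ) (c : CC X n) : alphaL n c - c ∈ Dsub n := by
  induction c using Finsupp.induction_linear with
  | zero => simp
  | add f g hf hg =>
    rw [map_add]
    have := add_mem hf hg
    convert this using 1
    abel
  | single x m =>
    have : Finsupp.single x m = m • Finsupp.single x (1 : ℤ) := by simp
    rw [this, map_smul, ← smul_sub]
    refine Submodule.smul_mem _ _ ?_
    rw [alphaL_single, alphaB_eq, ← Finset.add_sum_erase _ _ (Finset.mem_univ (fun _ => false))]
    have h0 : sgE n (fun _ => false) • Finsupp.single (tupE n (fun _ => false) x) (1 : ℤ)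
      = Finsupp.single x 1 := by
      have : tupE n (fun _ => false) x = x := by funext i; simp [tupE]
      rw [this]; simp [sgE]
    simp only [Bool.false_eq_true, if_false]
    rw [h0, add_sub_cancel_left]
    refine Submodule.sum_mem _ fun ε hε => ?_
    have hne := Finset.ne_of_mem_erase hε
    split
    · simp
    rename_i hε0
    refine Submodule.smul_mem _ _ (single_mem_Dsub ?_)
    have hex : ∃ j : ℕ, ∃ h : j < n + 1, ε ⟨j, h⟩ = true := by
      by_contra hcon
      apply hne
      funext i
      by_contra h
      exact hcon ⟨i, i.2, by simpa using h⟩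
    classical
    obtain ⟨hj, hj1⟩ := Nat.find_spec hex
    have hmin := fun m => Nat.find_min (H := hex) (m := m)
    generalize Nat.find hex = j at *
    cases j with
    | zero => exact absurd hj1 hε0
    | succ j =>
      refine ⟨j, hj, ?_⟩
      have : ε ⟨j, by omega⟩ = false := by
        by_contra h
        exact hmin j (by omega) ⟨by omega, by simpa using h⟩
      simp [tupE, this, hj1]

/-- Chains killed by all coordinate deletions at positions `≥ 1`. -/
def KK {X : Type*} (n : ℕ) (c : CC X n) : Prop :=
  ∀ j : Fin n, Finsupp.lmapDomain ℤ ℤ (fun x : Fin (n+1) → X => x ∘ j.succ.succAbove) c = 0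

lemma KK_map {X A : Type*} {n : ℕ} {c : CC X n} (hc : KK n c) (j : Fin n)
    (F : (Fin (n+1) → X) → A)
    (hF : ∀ x y : Fin (n+1) → X, (∀ i, i ≠ j.succ → x i = y i) → F x = F y) :
    Finsupp.lmapDomain ℤ ℤ F c = 0 := by
  have h : F = (fun z : Fin n → X => F (Fin.insertNth (α := fun _ => X) j.succ (z j) z)) ∘
      (fun x : Fin (n+1) → X => x ∘ j.succ.succAbove) := by
    funext x
    refine hF _ _ fun i hi => ?_
    obtain ⟨m, rfl⟩ := Fin.exists_succAbove_eq hi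
    simp
  rw [h, Finsupp.lmapDomain_comp, LinearMap.comp_apply, hc j, map_zero]

lemma KK_alpha {X : Type*} (n : ℕ) (c : CC X n) : KK n (alphaL n c) := by
  intro j
  rw [← LinearMap.comp_apply]
  have : (Finsupp.lmapDomain ℤ ℤ (fun x : Fin (n+1) → X => x ∘ j.succ.succAbove)).comp
      (alphaL n) = 0 := by
    refine Finsupp.lhom_ext' fun x => LinearMap.ext_ring ?_
    simp only [LinearMap.comp_apply, Finsupp.lsingle_apply, alphaL_single, alphaB_eq, map_sum,
      LinearMap.zero_apply]
    have := sum_flip_zero n j.succ (Fin.succ_ne_zero j)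
      (fun ε => Finsupp.single (tupE n ε x ∘ j.succ.succAbove) (1 : ℤ)) (fun ε => by
        congr 1
        funext i
        simp [tupE, flipE, Fin.succAbove_ne])
    rw [← this]
    refine Finset.sum_congr rfl fun ε _ => ?_
    split
    · simp
    · rw [map_smul]; simp
  rw [this]; rfl

lemma alphaL_eq_sum {X : Type*} (n : ℕ) (c : CC X n) :
    alphaL n c = ∑ ε : Fin (n+1) → Bool,
      if ε 0 then 0 else sgE n ε • Finsupp.lmapDomain ℤ ℤ (tupE n ε) c := by
  induction c using Finsupp.induction_linear with
  | zero => simp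
  | add f g hf hg =>
    rw [map_add, hf, hg, ← Finset.sum_add_distrib]
    refine Finset.sum_congr rfl fun ε _ => ?_
    split
    · simp
    · rw [map_add, smul_add]
  | single x m =>
    have : Finsupp.single x m = m • Finsupp.single x (1 : ℤ) := by simp
    rw [this, map_smul, alphaL_single, alphaB_eq, Finset.smul_sum]
    refine Finset.sum_congr rfl fun ε _ => ?_
    split
    · simp
    · rw [map_smul, smul_comm]; simp

lemma alphaL_of_KK {X : Type*} (n : ℕ) (c : CC X n) (hc : KK n c) : alphaL n c = c := by
  rw [alphaL_eq_sum, Finset.sum_eq_single (fun _ => false)]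
  · have : tupE (X := X) n (fun _ => false) = id := by funext x i; simp [tupE]
    rw [this]
    simp [sgE]
  · intro ε _ hne
    split
    · rfl
    rename_i hε0
    have hex : (Finset.univ.filter fun i => ε i = true).Nonempty := by
      by_contra hcon
      apply hne
      funext i
      by_contra h
      exact hcon ⟨i, by simpa using h⟩
    obtain ⟨p, hp, hmax⟩ := Finset.exists_max_image _ (fun i : Fin (n+1) => (i : ℕ)) hex
    simp only [Finset.mem_filter, Finset.mem_univ, true_and] at hp hmax
    have hp0 : p ≠ 0 := by rintro rfl; exact hε0 hp
    obtain ⟨j, rfl⟩ := Fin.exists_succ_eq.2 hp0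
    rw [KK_map hc j, smul_zero]
    intro x y hxy
    funext i
    simp only [tupE]
    split
    · rename_i hi
      refine hxy _ fun h => ?_
      have h1 := hmax i hi
      have h2 := congrArg Fin.val h
      simp at h1 h2
      omega
    · rename_i hi
      refine hxy _ fun h => ?_
      exact hi (h ▸ hp)
  · simp

lemma bdL_apply {X : Type*} {k : ℕ} (ops : Fin k → X → X → X) (a : Fin k → ℤ) (n : ℕ)
    (c : CC X (n+1)) : bdL ops a n c = ∑ i : Fin (n+2), ∑ r : Fin k,
    (((-1 : ℤ) ^ (i : ℕ)) * a r) • Finsupp.lmapDomain ℤ ℤ (dFun (ops r) (n+1) i) c := by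
  simp only [bdL, LinearMap.sum_apply, LinearMap.smul_apply]

lemma KK_bd {X : Type*} {k : ℕ} (ops : Fin k → X → X → X) (a : Fin k → ℤ) (n : ℕ)
    (c : CC X (n+1)) (hc : KK (n+1) c) : KK n (bdL ops a n c) := by
  intro j
  rw [bdL_apply]
  simp only [map_sum, map_smul]
  refine Finset.sum_eq_zero fun i _ => Finset.sum_eq_zero fun r _ => ?_
  rw [← LinearMap.comp_apply, ← Finsupp.lmapDomain_comp]
  by_cases hij : (i : ℕ) ≤ (j : ℕ) + 1
  · rw [KK_map hc j.succ, smul_zero]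
    intro x y hxy
    funext m
    have hm := Fin.succAbove_ne j.succ m
    simp only [Function.comp, dFun]
    generalize j.succ.succAbove m = p at *
    have hm' : (p : ℕ) ≠ j + 1 := fun h => hm (Fin.ext (by simpa using h))
    split
    · rw [hxy, hxy] <;> intro h <;> have := congrArg Fin.val h <;> simp at this <;> omega
    · rw [hxy]; intro h; have := congrArg Fin.val h; simp at this; omega
  · rw [KK_map hc j.castSucc, smul_zero]
    intro x y hxy
    funext m
    have hm := Fin.succAbove_ne j.succ m
    simp only [Function.comp, dFun]
    generalize j.succ.succAbove m = p at *
    have hm' : (p : ℕ) ≠ j + 1 := fun h => hm (Fin.ext (by simpa using h))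
    split
    · rw [hxy, hxy] <;> intro h <;> have := congrArg Fin.val h <;> simp at this <;> omega
    · rw [hxy]; intro h; have := congrArg Fin.val h; simp at this; omega

lemma bd_D {X : Type*} {k : ℕ} (ops : Fin k → X → X → X) (a : Fin k → ℤ)
    (hidem : ∀ (r : Fin k) (x : X), ops r x x = x) (n : ℕ)
    (c : CC X (n+1)) (hc : c ∈ Dsub (n+1)) : bdL ops a n c ∈ Dsub n := by
  have : Dsub (n+1) ≤ (Dsub n).comap (bdL ops a n) := by
    refine Dsub_le fun x hx => ?_
    obtain ⟨j, h, e⟩ := hx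
    rw [Submodule.mem_comap, bdL_apply, ← Submodule.Quotient.mk_eq_zero, ← Submodule.mkQ_apply,
      map_sum, Finset.sum_eq_add (⟨j, by omega⟩ : Fin (n+2)) (⟨j+1, h⟩ : Fin (n+2))]
    · rw [← map_add, ← Finset.sum_add_distrib]
      refine Eq.trans (congrArg _ ?_) (map_zero (Dsub n).mkQ)
      refine Finset.sum_eq_zero fun r _ => ?_
      have : dFun (ops r) (n+1) ⟨j, by omega⟩ x = dFun (ops r) (n+1) ⟨j+1, h⟩ x := by
        funext m
        simp only [dFun]
        rcases lt_trichotomy (m : ℕ) j with h1 | h1 | h1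
        · rw [if_pos h1, if_pos (by omega), e]
        · rw [if_neg (by omega), if_pos (by omega)]
          have hm1 : m.castSucc = ⟨j, by omega⟩ := Fin.ext h1
          have hm2 : m.succ = ⟨j+1, h⟩ := Fin.ext (by simpa using h1)
          rw [hm1, hm2, e, hidem]
        · rw [if_neg (by omega), if_neg (by omega)]
      simp [this, pow_succ]
    · simp [Fin.ext_iff]
    · rintro i - ⟨h1, h2⟩
      rw [Submodule.mkQ_apply, Submodule.Quotient.mk_eq_zero]
      refine Submodule.sum_mem _ fun r _ => Submodule.smul_mem _ _ ?_
      rw [Finsupp.lmapDomain_apply, Finsupp.mapDomain_single]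
      refine single_mem_Dsub ?_
      have h1' : (i : ℕ) ≠ j := fun h => h1 (Fin.ext h)
      have h2' : (i : ℕ) ≠ j + 1 := fun h => h2 (Fin.ext h)
      have hi := i.2
      by_cases hij : (i : ℕ) < j
      · obtain ⟨j, rfl⟩ : ∃ l, j = l + 1 := ⟨j - 1, by omega⟩
        refine ⟨j, by omega, ?_⟩
        simp only [dFun]
        rw [if_neg (by omega), if_neg (by omega)]
        exact e
      · refine ⟨j, by omega, ?_⟩
        simp only [dFun]
        rw [if_pos (by omega), if_pos (by omega)]
        simp only [Fin.castSucc_mk]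
        rw [e]
    · simp
    · simp
  exact this hc

lemma alpha_comm {X : Type*} {k : ℕ} (ops : Fin k → X → X → X) (a : Fin k → ℤ)
    (hidem : ∀ (r : Fin k) (x : X), ops r x x = x) (n : ℕ) (c : CC X (n+1)) :
    alphaL n (bdL ops a n c) = bdL ops a n (alphaL (n+1) c) := by
  have h1 := alphaL_D n _ (bd_D ops a hidem n _ (alphaL_sub_mem (n+1) c))
  rw [map_sub, map_sub, alphaL_of_KK n _ (KK_bd ops a n _ (KK_alpha _ _)), sub_eq_zero] at h1
  exact h1.symm

lemma alpha_idem {X : Type*} (n : ℕ) (c : CC X n) : alphaL n (alphaL n c) = alphaL n c :=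
  alphaL_of_KK n _ (KK_alpha n c)

/-- Abstract splitting of homology. -/
lemma splitting {C C' : Type*} [AddCommGroup C] [AddCommGroup C']
    (d : C' →ₗ[ℤ] C) (al : C →ₗ[ℤ] C) (al' : C' →ₗ[ℤ] C') (D Z W N : Submodule ℤ C)
    (D' : Submodule ℤ C')
    (hD : ∀ c ∈ D, al c = 0) (hsub : ∀ c, c - al c ∈ D)
    (hsub' : ∀ c, c - al' c ∈ D') (hD' : ∀ c ∈ D', d c ∈ D)
    (hcomm : ∀ c, al (d c) = d (al' c))
    (hZW : ∀ z ∈ Z, z - al z ∈ W) (hZN : Z ≤ N) (hNZ : ∀ w ∈ N, al w ∈ Z)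
    (hWZ : W ≤ Z) (hWD : W ≤ D) :
    Nonempty ((Z ⧸ Submodule.comap Z.subtype (LinearMap.range d)) ≃ₗ[ℤ]
      (W ⧸ Submodule.comap W.subtype (Submodule.map d D')) ×
      (N ⧸ Submodule.comap N.subtype (D ⊔ LinearMap.range d))) := by
  have hid : ∀ c, al (al c) = al c := fun c => by
    have := hD _ (hsub c)
    rw [map_sub, sub_eq_zero] at this
    exact this.symm
  let p : Z →ₗ[ℤ] W := (LinearMap.id - al).restrict (p := Z) (q := W) hZW
  let q : N →ₗ[ℤ] Z := al.restrict (p := N) (q := Z) hNZ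
  let f1 := Submodule.mapQ (Submodule.comap Z.subtype (LinearMap.range d))
    (Submodule.comap W.subtype (Submodule.map d D')) p (by
      rintro ⟨z, hz⟩ ⟨y, hy⟩
      refine ⟨y - al' y, hsub' y, ?_⟩
      simp only [Submodule.subtype_apply] at hy
      simp [p, LinearMap.restrict_apply, ← hy, hcomm])
  let f2 := Submodule.mapQ (Submodule.comap Z.subtype (LinearMap.range d))
    (Submodule.comap N.subtype (D ⊔ LinearMap.range d)) (Submodule.inclusion hZN) (by
      rintro ⟨z, hz⟩ h
      exact Submodule.mem_sup_right h)
  let g1 := Submodule.mapQ (Submodule.comap W.subtype (Submodule.map d D'))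
    (Submodule.comap Z.subtype (LinearMap.range d)) (Submodule.inclusion hWZ) (by
      rintro ⟨z, hz⟩ ⟨y, _, hy⟩
      exact ⟨y, hy⟩)
  let g2 := Submodule.mapQ (Submodule.comap N.subtype (D ⊔ LinearMap.range d))
    (Submodule.comap Z.subtype (LinearMap.range d)) q (by
      rintro ⟨z, hz⟩ h
      obtain ⟨u, hu, v, ⟨y, rfl⟩, huv⟩ := Submodule.mem_sup.1 h
      simp only [Submodule.subtype_apply] at huv
      refine ⟨al' y, ?_⟩
      simp [q, LinearMap.restrict_apply, ← huv, hD u hu, hcomm])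
  refine ⟨LinearEquiv.ofLinearMap (f1.prod f2) (g1.coprod g2) ?_ ?_⟩
  · refine LinearMap.ext ?_
    rintro ⟨u, v⟩
    obtain ⟨⟨u, hu⟩, rfl⟩ := Submodule.Quotient.mk_surjective _ u
    obtain ⟨⟨v, hv⟩, rfl⟩ := Submodule.Quotient.mk_surjective _ v
    refine Prod.ext ?_ ?_
    · change Submodule.Quotient.mk (p (Submodule.inclusion hWZ ⟨u, hu⟩ + q ⟨v, hv⟩)) =
        Submodule.Quotient.mk _
      refine congrArg _ (Subtype.ext ?_)
      simp [p, q, LinearMap.restrict_apply, hid, hD u (hWD hu)]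
    · change Submodule.Quotient.mk (Submodule.inclusion hZN
        (Submodule.inclusion hWZ ⟨u, hu⟩ + q ⟨v, hv⟩)) = Submodule.Quotient.mk _
      rw [Submodule.Quotient.eq]
      refine Submodule.mem_sup_left ?_
      have := sub_mem (hWD hu) (hsub v)
      simp only [q, LinearMap.restrict_apply]
      convert this using 1
      simp
      abel
  · refine LinearMap.ext ?_
    intro u
    obtain ⟨⟨u, hu⟩, rfl⟩ := Submodule.Quotient.mk_surjective _ u
    change Submodule.Quotient.mk (Submodule.inclusion hWZ (p ⟨u, hu⟩) +
      q (Submodule.inclusion hZN ⟨u, hu⟩)) = Submodule.Quotient.mk _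
    refine congrArg _ (Subtype.ext ?_)
    simp [p, q, LinearMap.restrict_apply]

lemma sub_alpha_mem {X : Type*} (n : ℕ) (c : CC X n) : c - alphaL n c ∈ Dsub n := by
  have := neg_mem (alphaL_sub_mem n c)
  rwa [neg_sub] at this

end helpers

/-- for a multispindle `X`, `α(x₀,…,xₙ) = (x₀,x₁−x₀,…,xₙ−x_{n−1})`
vanishes on the degenerate subcomplex, is a chain map, and splits the quotient
`β : C(X) → C^N(X) = C(X)/C^D(X)`; consequently `Hₙ(X) ≅ Hₙ^D(X) ⊕ Hₙ^N(X)`. -/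
theorem alpha_splits_normalized {X : Type*} {k : ℕ}
    (ops : Fin k → X → X → X) (a : Fin k → ℤ)
    (hidem : ∀ (r : Fin k) (x : X), ops r x x = x)
    (hdist : ∀ (r s : Fin k) (x y z : X),
      ops r (ops s x y) z = ops s (ops r x z) (ops r y z)) :
    (∀ (n : ℕ) (c : CC X n), c ∈ Dsub n → alphaL n c = 0) ∧
    (∀ n : ℕ, (alphaL n).comp (bdL ops a n) = (bdL ops a n).comp (alphaL (n+1))) ∧
    (∀ (n : ℕ) (c : CC X n), (Dsub n).mkQ (alphaL n c) = (Dsub n).mkQ c) ∧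
    (∀ n : ℕ, Nonempty (HC ops a n ≃ₗ[ℤ] HD ops a n × HN ops a n)) := by
  refine ⟨alphaL_D, fun n => LinearMap.ext (alpha_comm ops a hidem n), fun n c => ?_, fun n => ?_⟩
  · rw [Submodule.mkQ_apply, Submodule.mkQ_apply, Submodule.Quotient.eq]
    exact alphaL_sub_mem n c
  · refine splitting (bdL ops a n) (alphaL n) (alphaL (n+1)) (Dsub n) (ZC ops a n) (ZD ops a n)
      (ZN ops a n) (Dsub (n+1)) (alphaL_D n) (sub_alpha_mem n) (sub_alpha_mem (n+1))
      (bd_D ops a hidem n) (alpha_comm ops a hidem n) ?_ ?_ ?_ ?_ ?_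
    · cases n with
      | zero => exact fun z _ => sub_alpha_mem 0 z
      | succ n =>
        intro z hz
        have hz' : bdL ops a n z = 0 := hz
        refine ⟨?_, sub_alpha_mem (n+1) z⟩
        change bdL ops a n _ = 0
        rw [map_sub, ← alpha_comm ops a hidem, hz']
        simp
    · cases n with
      | zero => exact le_rfl
      | succ n =>
        intro z hz
        have hz' : bdL ops a n z = 0 := hz
        change bdL ops a n z ∈ Dsub n
        rw [hz']
        exact zero_mem _
    · cases n with
      | zero => exact fun _ _ => Submodule.mem_top
      | succ n =>
        intro w hw
        change bdL ops a n _ = 0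
        rw [← alpha_comm ops a hidem]
        exact alphaL_D n _ hw
    · cases n with
      | zero => exact bot_le
      | succ n => exact inf_le_left
    · cases n with
      | zero => exact bot_le
      | succ n => exact inf_le_right
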